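/- In the symmetric group of permutations of the 9-element set {1, …, 9}, the subgroup generated by σ = (1 2 3)(4 5 6)(7 8 9) and τ₃ = (1 2 4)(3 7 5)(6 8 9) is isomorphic to the projective special linear group PSL(2, 𝔽₈) over the field with 8 elements; in particular it has order 504. -/

import Mathlib

open Equiv

namespace Dessin

/-- A computable model of the field with eight elements, `𝔽₂[x]/(x³+x+1)`, bits of `Fin 8`. -/
def K : Type := Fin 8

instance : DecidableEq K := inferInstanceAs (DecidableEq (Fin 8))
instance : Fintype K := inferInstanceAs (Fintype (Fin 8))

/-- The element with the given bits. -/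
def ofN (n : ℕ) : K := (⟨n % 8, Nat.mod_lt _ (by norm_num)⟩ : Fin 8)

/-- The bits of an element. -/
def toN (a : K) : ℕ := Fin.val (n := 8) a

/-- Reduction modulo `x³+x+1` of a polynomial of degree at most four. -/
def red (r : ℕ) : ℕ :=
  (r ^^^ (r / 16) * 22) ^^^ ((r ^^^ (r / 16) * 22) / 8 % 2) * 11

def addK (a b : K) : K := ofN (toN a ^^^ toN b)

def mulK (a b : K) : K :=
  ofN (red (((toN b % 2) * toN a) ^^^ ((toN b / 2 % 2) * (2 * toN a)) ^^^
    ((toN b / 4) * (4 * toN a))))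

def invK (a : K) : K := mulK (mulK a a) (mulK (mulK a a) (mulK a a))

instance : Zero K := ⟨ofN 0⟩
instance : One K := ⟨ofN 1⟩
instance : Add K := ⟨addK⟩
instance : Mul K := ⟨mulK⟩
instance : Neg K := ⟨id⟩
instance : Inv K := ⟨invK⟩

instance : Field K where
  add_assoc := by decide +kernel
  zero_add := by decide +kernel
  add_zero := by decide +kernel
  add_comm := by decide +kernel
  left_distrib := by decide +kernel
  right_distrib := by decide +kernel
  zero_mul := by decide +kernel
  mul_zero := by decide +kernel
  mul_assoc := by decide +kernel
  one_mul := by decide +kernel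
  mul_one := by decide +kernel
  mul_comm := by decide +kernel
  neg_add_cancel := by decide +kernel
  exists_pair_ne := ⟨0, 1, by decide +kernel⟩
  mul_inv_cancel := by decide +kernel
  inv_zero := by decide +kernel
  nsmul := nsmulRec
  zsmul := zsmulRec
  nnqsmul := _
  nnqsmul_def := fun _ _ => rfl
  qsmul := _
  qsmul_def := fun _ _ => rfl

open Matrix

abbrev G := Matrix.SpecialLinearGroup (Fin 2) K

/-- Homogeneous coordinates of the nine points of the projective line. -/
def vx (i : Fin 9) : K := ![1, 0, ofN 3, 1, ofN 7, ofN 6, ofN 5, ofN 4, ofN 2] i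
def vy (i : Fin 9) : K := ![0, 1, 1, 1, 1, 1, 1, 1, 1] i

/-- Label of the point with given homogeneous coordinates. -/
def idx (x y : K) : Fin 9 :=
  if y = 0 then 0 else (![1, 3, 8, 2, 7, 6, 5, 4] : Fin 8 → Fin 9) (x * y⁻¹)

lemma idx_smul : ∀ l x y : K, l ≠ 0 → idx (l * x) (l * y) = idx x y := by decide +kernel

lemma idx_v : ∀ i, idx (vx i) (vy i) = i := by decide +kernel

lemma v_idx : ∀ x y : K, ¬ (x = 0 ∧ y = 0) →
    ∃ l : K, l ≠ 0 ∧ x = l * vx (idx x y) ∧ y = l * vy (idx x y) := by decide +kernel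

lemma v_ne : ∀ i, ¬ (vx i = 0 ∧ vy i = 0) := by decide +kernel

def act (g : G) (i : Fin 9) : Fin 9 :=
  idx (g 0 0 * vx i + g 0 1 * vy i) (g 1 0 * vx i + g 1 1 * vy i)

lemma det_eq (g : G) : g 0 0 * g 1 1 - g 0 1 * g 1 0 = 1 := by
  have := g.2
  rwa [Matrix.det_fin_two] at this

lemma ne_of_g (g : G) (x y : K) (h : ¬ (x = 0 ∧ y = 0)) :
    ¬ (g 0 0 * x + g 0 1 * y = 0 ∧ g 1 0 * x + g 1 1 * y = 0) := by
  rintro ⟨h1, h2⟩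
  have d := det_eq g
  exact h ⟨by linear_combination g 1 1 * h1 - g 0 1 * h2 - x * d,
    by linear_combination g 0 0 * h2 - g 1 0 * h1 - y * d⟩

lemma act_one (i : Fin 9) : act 1 i = i := by
  simp [act, idx_v]

lemma act_mul (g h : G) (i : Fin 9) : act (g * h) i = act g (act h i) := by
  obtain ⟨l, hl, hx, hy⟩ := v_idx _ _ (ne_of_g h _ _ (v_ne i))
  unfold act
  rw [← idx_smul l _ _ hl]
  conv_rhs => rw [← idx_smul l _ _ hl]
  simp only [Matrix.SpecialLinearGroup.coe_mul, Matrix.mul_apply, Fin.sum_univ_two]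
  rw [idx_smul _ _ _ hl]
  congr 1
  · linear_combination g 0 0 * hx + g 0 1 * hy
  · linear_combination g 1 0 * hx + g 1 1 * hy

/-- The action of `SL₂(𝔽₈)` on the nine labels. -/
def phi : G →* Equiv.Perm (Fin 9) where
  toFun g := ⟨act g, act g⁻¹, fun i => by rw [← act_mul]; simp [act_one],
    fun i => by rw [← act_mul]; simp [act_one]⟩
  map_one' := by ext i; simp [act_one]
  map_mul' g h := by ext i; simp [act_mul]

lemma key_inj : (∀ a b : K, idx a b = 0 → b = 0) ∧ (∀ a b : K, idx a b = 1 → a = 0) ∧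
    (∀ a b : K, idx a b = 3 → a = b) ∧ (∀ a : K, a * a = 1 → a = 1) := by decide +kernel

lemma phi_inj : Function.Injective phi := by
  rw [injective_iff_map_eq_one]
  intro g hg
  have h : ∀ i, act g i = i := fun i => congrArg (fun p : Equiv.Perm (Fin 9) => p i) hg
  have h0 := key_inj.1 _ _ (h 0)
  have h1 := key_inj.2.1 _ _ (h 1)
  have h3 := key_inj.2.2.1 _ _ (h 3)
  simp [vx, vy] at h0 h1 h3
  have d := det_eq g
  rw [h0, h1] at h3
  simp only [add_zero, zero_add] at h3
  rw [h0, ← h3] at d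
  have e := key_inj.2.2.2 (g 0 0) (by linear_combination d)
  ext i j
  fin_cases i <;> fin_cases j <;> simp [h0, h1, e, ← h3]

def U (t : K) : G := ⟨!![1, t; 0, 1], by simp [Matrix.det_fin_two]⟩
def L (t : K) : G := ⟨!![1, 0; t, 1], by simp [Matrix.det_fin_two]⟩
def S : G := ⟨!![0, ofN 3; ofN 6, 1], by rw [Matrix.det_fin_two]; decide +kernel⟩
def T : G := ⟨!![0, 1; 1, 1], by rw [Matrix.det_fin_two]; decide +kernel⟩

lemma U_coe (t : K) : (U t : Matrix (Fin 2) (Fin 2) K) = !![1, t; 0, 1] := rfl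
lemma L_coe (t : K) : (L t : Matrix (Fin 2) (Fin 2) K) = !![1, 0; t, 1] := rfl

lemma U_add (s t : K) : U (s + t) = U s * U t := by
  ext i j
  fin_cases i <;> fin_cases j <;> simp [U_coe, Matrix.SpecialLinearGroup.coe_mul, Matrix.mul_apply, Fin.sum_univ_two, add_comm]

lemma L_add (s t : K) : L (s + t) = L s * L t := by
  ext i j
  fin_cases i <;> fin_cases j <;> simp [L_coe, Matrix.SpecialLinearGroup.coe_mul, Matrix.mul_apply, Fin.sum_univ_two]

lemma span_K : ∀ t : K, ∃ a b c : Bool, t = (if a then 1 else 0) + (if b then ofN 2 else 0) +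
    (if c then ofN 4 else 0) := by decide +kernel

lemma phi_S : phi S = c[0, 1, 2] * c[3, 4, 5] * c[6, 7, 8] := by
  ext i; revert i; decide +kernel
lemma phi_T : phi T = c[0, 1, 3] * c[2, 6, 4] * c[5, 7, 8] := by
  ext i; revert i; decide +kernel

lemma wU1 : U 1 = T*S*T*S*T*S*S*T*S := by
  apply phi_inj; simp only [map_mul, phi_S, phi_T]; ext i; revert i; decide +kernel
lemma wU2 : U (ofN 2) = T*S*S*T*T*S*T*S*T*S*T*S := by
  apply phi_inj; simp only [map_mul, phi_S, phi_T]; ext i; revert i; decide +kernel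
lemma wU4 : U (ofN 4) = S*T*T*S*S*T*S*S*T*S := by
  apply phi_inj; simp only [map_mul, phi_S, phi_T]; ext i; revert i; decide +kernel
lemma wL1 : L 1 = S*T*S*T*S*S*T*S := by
  apply phi_inj; simp only [map_mul, phi_S, phi_T]; ext i; revert i; decide +kernel
lemma wL2 : L (ofN 2) = S*T*S*T*S*T*S*S*T := by
  apply phi_inj; simp only [map_mul, phi_S, phi_T]; ext i; revert i; decide +kernel
lemma wL4 : L (ofN 4) = S*T*S*S*T*T*S*T*S*T*S*T := by
  apply phi_inj; simp only [map_mul, phi_S, phi_T]; ext i; revert i; decide +kernel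

lemma closure_top : Subgroup.closure ({S, T} : Set G) = ⊤ := by
  set C := Subgroup.closure ({S, T} : Set G) with hC
  have hS : S ∈ C := Subgroup.subset_closure (by simp)
  have hT : T ∈ C := Subgroup.subset_closure (by simp)
  have m := fun {a b : G} (ha : a ∈ C) (hb : b ∈ C) => C.mul_mem ha hb
  have hU0 : U 0 = 1 := by
    ext i j
    fin_cases i <;> fin_cases j <;> simp [U_coe]
  have hL0 : L 0 = 1 := by
    ext i j
    fin_cases i <;> fin_cases j <;> simp [L_coe]
  have u1 : U 1 ∈ C := by rw [wU1]; repeat' first | exact hS | exact hT | apply m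
  have u2 : U (ofN 2) ∈ C := by rw [wU2]; repeat' first | exact hS | exact hT | apply m
  have u4 : U (ofN 4) ∈ C := by rw [wU4]; repeat' first | exact hS | exact hT | apply m
  have l1 : L 1 ∈ C := by rw [wL1]; repeat' first | exact hS | exact hT | apply m
  have l2 : L (ofN 2) ∈ C := by rw [wL2]; repeat' first | exact hS | exact hT | apply m
  have l4 : L (ofN 4) ∈ C := by rw [wL4]; repeat' first | exact hS | exact hT | apply m
  have hU : ∀ t, U t ∈ C := by
    intro t
    obtain ⟨a, b, c, rfl⟩ := span_K t
    rw [U_add, U_add]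
    refine m (m ?_ ?_) ?_ <;> split_ifs <;> first | assumption | (rw [hU0]; exact C.one_mem)
  have hL : ∀ t, L t ∈ C := by
    intro t
    obtain ⟨a, b, c, rfl⟩ := span_K t
    rw [L_add, L_add]
    refine m (m ?_ ?_) ?_ <;> split_ifs <;> first | assumption | (rw [hL0]; exact C.one_mem)
  have gen : ∀ g : G, g 1 0 ≠ 0 → g ∈ C := by
    intro g hg
    have d := det_eq g
    have : g = U ((g 0 0 - 1) / g 1 0) * L (g 1 0) * U ((g 1 1 - 1) / g 1 0) := by
      ext i j
      fin_cases i <;> fin_cases j <;>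
        simp [U_coe, L_coe, Matrix.SpecialLinearGroup.coe_mul, Matrix.mul_apply, Fin.sum_univ_two] <;> field_simp
      · ring
      · linear_combination -d
      · ring
    rw [this]
    exact m (m (hU _) (hL _)) (hU _)
  rw [eq_top_iff]
  intro g _
  by_cases hg : g 1 0 = 0
  · have d := det_eq g
    have h1 : g * L 1 ∈ C := by
      apply gen
      simp [L_coe, Matrix.SpecialLinearGroup.coe_mul, Matrix.mul_apply, Fin.sum_univ_two, hg]
      intro h
      simp [hg, h] at d
    exact (Subgroup.mul_mem_cancel_right _ (hL 1)).1 h1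
  · exact gen g hg

lemma card_quad : Fintype.card {q : (K × K) × (K × K) // q.1.1 * q.2.2 - q.1.2 * q.2.1 = 1} = 504 := by
  decide +kernel

lemma card_G : Nat.card G = 504 := by
  rw [← card_quad, ← Nat.card_eq_fintype_card]
  refine Nat.card_congr ⟨fun g => ⟨((g 0 0, g 0 1), (g 1 0, g 1 1)), det_eq g⟩,
    fun q => ⟨!![q.1.1.1, q.1.1.2; q.1.2.1, q.1.2.2], ?_⟩, ?_, ?_⟩
  · rw [Matrix.det_fin_two]; exact q.2
  · intro g
    ext i j
    fin_cases i <;> fin_cases j <;> rfl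
  · intro q
    rfl

lemma range_phi : phi.range = Subgroup.closure
    ({c[0, 1, 2] * c[3, 4, 5] * c[6, 7, 8], c[0, 1, 3] * c[2, 6, 4] * c[5, 7, 8]} :
      Set (Equiv.Perm (Fin 9))) := by
  rw [MonoidHom.range_eq_map, ← closure_top, MonoidHom.map_closure, Set.image_pair, phi_S, phi_T]

noncomputable def eK : K ≃+* GaloisField 2 3 := by
  letI : Fintype (GaloisField 2 3) := Fintype.ofFinite _
  refine FiniteField.ringEquivOfCardEq ?_
  rw [← Nat.card_eq_fintype_card (α := GaloisField 2 3), GaloisField.card 2 3 (by norm_num)]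
  rfl

/-- A ring isomorphism induces an isomorphism of special linear groups. -/
def slCongr {R R' : Type*} [CommRing R] [CommRing R'] (e : R ≃+* R') :
    Matrix.SpecialLinearGroup (Fin 2) R ≃* Matrix.SpecialLinearGroup (Fin 2) R' :=
  MonoidHom.toMulEquiv (Matrix.SpecialLinearGroup.map e.toRingHom)
    (Matrix.SpecialLinearGroup.map e.symm.toRingHom)
    (MonoidHom.ext fun g => Matrix.SpecialLinearGroup.ext _ _ fun i j =>
      e.symm_apply_apply (g i j))
    (MonoidHom.ext fun g => Matrix.SpecialLinearGroup.ext _ _ fun i j =>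
      e.apply_symm_apply (g i j))

noncomputable def eSL : G ≃* Matrix.SpecialLinearGroup (Fin 2) (GaloisField 2 3) :=
  slCongr eK

lemma center_bot : Subgroup.center (Matrix.SpecialLinearGroup (Fin 2) (GaloisField 2 3)) = ⊥ := by
  rw [eq_bot_iff]
  intro A hA
  obtain ⟨r, hr, h⟩ := Matrix.SpecialLinearGroup.mem_center_iff.1 hA
  have h2 : r = 1 := by
    apply eK.symm.injective
    rw [map_one]
    apply key_inj.2.2.2
    rw [← map_mul, ← map_one eK.symm]
    congr 1
    simpa [pow_two] using hr
  rw [Subgroup.mem_bot]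
  apply Subtype.ext
  rw [← h, h2]
  simp

end Dessin

theorem stmt12 :
    let σ : Equiv.Perm (Fin 9) := c[0, 1, 2] * c[3, 4, 5] * c[6, 7, 8]
    let τ₃ : Equiv.Perm (Fin 9) := c[0, 1, 3] * c[2, 6, 4] * c[5, 7, 8]
    let H := Subgroup.closure ({σ, τ₃} : Set (Equiv.Perm (Fin 9)))
    Nonempty (H ≃* Matrix.ProjectiveSpecialLinearGroup (Fin 2) (GaloisField 2 3)) ∧
      Nat.card H = 504 := by
  intro σ τ₃ H
  have e : Dessin.G ≃* H := (MonoidHom.ofInjective Dessin.phi_inj).trans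
    (MulEquiv.subgroupCongr Dessin.range_phi)
  refine ⟨⟨(e.symm.trans Dessin.eSL).trans ?_⟩, ?_⟩
  · exact QuotientGroup.quotientBot.symm.trans
      (QuotientGroup.quotientMulEquivOfEq Dessin.center_bot.symm)
  · rw [← Nat.card_congr e.toEquiv, Dessin.card_G]
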